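/- For every connected planar graph G, seg(G) ≤ lin(G)². -/

import Mathlib

/-!
Fix a planar drawing `ρ` realising the line cover number with a set `𝓛` of `ℓ` lines; it has at
most `ℓ ^ 2` segments. Every edge lies on some line of `𝓛`
(`exists_line_of_segment_subset`), all edges of a segment lie on the same lines
(`onLine_of_reflTransGen`), and two edges on a common line that share a vertex belong to the same
segment (`aligned_of_onLine`).

Since `G` is connected, a segment `S` on a line `L` either contains every edge of `G`, or has a
vertex `v` incident to an edge outside `S` (`exists_leaving_edge`). In the second case that edge
lies on a line `L' ≠ L` of `𝓛`, so `v` is drawn at the point `L ∩ L'`; send `S` to `(L, L')`. In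
the first case send `S` to `(L, L)`. The pair determines `S`: a segment containing all edges is the
only one, and two segments on `L` having a vertex at `L ∩ L'` have a common vertex, hence coincide.
Thus the number of segments is at most `|𝓛 × 𝓛| = ℓ ^ 2`.
-/

open Set

variable {V : Type*}

/-- A planar straight-line drawing of a simple graph `G` in the plane `ℝ × ℝ`. -/
structure IsPlanarDrawing (G : SimpleGraph V) (ρ : V → ℝ × ℝ) : Prop where
  inj : Function.Injective ρ
  edge_inter : ∀ ⦃u v x y : V⦄, G.Adj u v → G.Adj x y → s(u, v) ≠ s(x, y) →
    ∀ p : ℝ × ℝ, p ∈ segment ℝ (ρ u) (ρ v) → p ∈ segment ℝ (ρ x) (ρ y) →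
      ∃ w : V, (w = u ∨ w = v) ∧ (w = x ∨ w = y) ∧ p = ρ w
  vertex_not_on_edge : ∀ ⦃u v w : V⦄, G.Adj u v → w ≠ u → w ≠ v →
    ρ w ∉ segment ℝ (ρ u) (ρ v)

/-- Two incident edges `e = {u,v}` and `f = {v,w}` are aligned in the drawing `ρ`
if the image of the shared vertex `v` lies strictly between the images of `u` and `w`. -/
def Aligned (G : SimpleGraph V) (ρ : V → ℝ × ℝ) (e f : Sym2 V) : Prop :=
  ∃ u v w : V, u ≠ w ∧ G.Adj u v ∧ G.Adj v w ∧ e = s(u, v) ∧ f = s(v, w) ∧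
    ρ v ∈ openSegment ℝ (ρ u) (ρ w)

/-- The number of (unordered) pairs of incident edges that are aligned in the drawing `ρ`. -/
noncomputable def numAlignedPairs (G : SimpleGraph V) (ρ : V → ℝ × ℝ) : ℕ :=
  Set.ncard {q : Sym2 (Sym2 V) | ∃ e f : Sym2 V, q = s(e, f) ∧ Aligned G ρ e f}

/-- The number of segments of the drawing `ρ`: the number of equivalence classes of edges
under the reflexive-transitive closure of the alignment relation. -/
noncomputable def numSegments (G : SimpleGraph V) (ρ : V → ℝ × ℝ) : ℕ :=
  Set.ncard {S : Set (Sym2 V) |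
    ∃ e ∈ G.edgeSet, S = {f | Relation.ReflTransGen (Aligned G ρ) e f}}

/-- The segment number of `G`: the minimum number of segments over all
planar straight-line drawings of `G`. -/
noncomputable def segNumber (G : SimpleGraph V) : ℕ :=
  sInf {n : ℕ | ∃ ρ : V → ℝ × ℝ, IsPlanarDrawing G ρ ∧ numSegments G ρ = n}

/-- A line in the plane. -/
def IsLine (L : Set (ℝ × ℝ)) : Prop :=
  ∃ a b : ℝ × ℝ, a ≠ b ∧ L = {p : ℝ × ℝ | ∃ t : ℝ, p = a + t • (b - a)}

/-- The line cover number of `G`: the minimum, over all planar straight-line drawings of `G`,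
of the minimum number of lines whose union contains the drawn segments of all edges. -/
noncomputable def linNumber (G : SimpleGraph V) : ℕ :=
  sInf {n : ℕ | ∃ ρ : V → ℝ × ℝ, IsPlanarDrawing G ρ ∧
    ∃ 𝓛 : Finset (Set (ℝ × ℝ)), 𝓛.card = n ∧ (∀ L ∈ 𝓛, IsLine L) ∧
      ∀ ⦃u v : V⦄, G.Adj u v → segment ℝ (ρ u) (ρ v) ⊆ ⋃ L ∈ 𝓛, L}

/-- The `k`-banana: vertices `a = Sum.inl false`, `b = Sum.inl true` (covering vertices) and
`c i = Sum.inr i` for `i : Fin k` (independent vertices); edges `{a, c i}` and `{c i, b}`. -/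
def banana (k : ℕ) : SimpleGraph (Bool ⊕ Fin k) :=
  SimpleGraph.fromRel fun x y =>
    ∃ i : Fin k, (x = Sum.inl false ∨ x = Sum.inl true) ∧ y = Sum.inr i

/-- A connected component of `G` is a path component if its induced subgraph is isomorphic
to a path graph with at least two vertices (i.e., at least one edge). -/
def IsPathComponent (G : SimpleGraph V) (c : G.ConnectedComponent) : Prop :=
  ∃ n : ℕ, 2 ≤ n ∧ Nonempty (G.induce c.supp ≃g SimpleGraph.pathGraph n)

lemma IsLine.exists_param {L : Set (ℝ × ℝ)} (hL : IsLine L) {p q r : ℝ × ℝ}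
    (hp : p ∈ L) (hq : q ∈ L) (hr : r ∈ L) (hpq : p ≠ q) : ∃ t : ℝ, r = p + t • (q - p) := by
  obtain ⟨a, b, -, rfl⟩ := hL
  obtain ⟨s, rfl⟩ := hp
  obtain ⟨s', rfl⟩ := hq
  obtain ⟨s'', rfl⟩ := hr
  have hs : s' - s ≠ 0 := by
    intro h
    apply hpq
    rw [sub_eq_zero.mp h]
  refine ⟨(s'' - s) / (s' - s), ?_⟩
  ext <;> simp <;> field_simp <;> ring

lemma IsLine.param_mem {L : Set (ℝ × ℝ)} (hL : IsLine L) {p q : ℝ × ℝ}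
    (hp : p ∈ L) (hq : q ∈ L) (t : ℝ) : p + t • (q - p) ∈ L := by
  obtain ⟨a, b, -, rfl⟩ := hL
  obtain ⟨s, rfl⟩ := hp
  obtain ⟨s', rfl⟩ := hq
  refine ⟨s + t * (s' - s), ?_⟩
  ext <;> simp <;> ring

lemma IsLine.eq_of_mem {L L' : Set (ℝ × ℝ)} (hL : IsLine L) (hL' : IsLine L') {p q : ℝ × ℝ}
    (hpq : p ≠ q) (hp : p ∈ L) (hq : q ∈ L) (hp' : p ∈ L') (hq' : q ∈ L') : L = L' := by
  ext r
  constructor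
  · intro hr
    obtain ⟨t, rfl⟩ := hL.exists_param hp hq hr hpq
    exact hL'.param_mem hp' hq' t
  · intro hr
    obtain ⟨t, rfl⟩ := hL'.exists_param hp' hq' hr hpq
    exact hL.param_mem hp hq t

/-- The edge `e` is drawn on `L`, expressed through its endpoints: for a line `L` this is the same
as the drawn segment being contained in `L`. -/
def OnLine (ρ : V → ℝ × ℝ) (L : Set (ℝ × ℝ)) (e : Sym2 V) : Prop :=
  ∀ v ∈ e, ρ v ∈ L

lemma onLine_mk {ρ : V → ℝ × ℝ} {L : Set (ℝ × ℝ)} {u v : V} :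
    OnLine ρ L s(u, v) ↔ ρ u ∈ L ∧ ρ v ∈ L := by
  simp [OnLine]

/-- A drawn edge covered by finitely many lines lies on one of them: two of its infinitely many
points are on the same line. -/
lemma exists_line_of_segment_subset {ρ : V → ℝ × ℝ}
    {𝓛 : Finset (Set (ℝ × ℝ))} (hlin : ∀ L ∈ 𝓛, IsLine L) {u v : V}
    (hcov : segment ℝ (ρ u) (ρ v) ⊆ ⋃ L ∈ 𝓛, L) : ∃ L ∈ 𝓛, OnLine ρ L s(u, v) := by
  have hmem : ∀ t ∈ Icc (0 : ℝ) 1, ∃ L ∈ 𝓛, ρ u + t • (ρ v - ρ u) ∈ L := by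
    intro t ht
    have h : ρ u + t • (ρ v - ρ u) ∈ segment ℝ (ρ u) (ρ v) := by
      rw [segment_eq_image']
      exact ⟨t, ht, rfl⟩
    simpa using hcov h
  choose! f hf hf' using hmem
  obtain ⟨s, hs, t, ht, hst, hfst⟩ :=
    (Icc_infinite (zero_lt_one' ℝ)).exists_ne_map_eq_of_mapsTo (f := f) (t := (𝓛 : Set _))
      (fun t ht => hf t ht) 𝓛.finite_toSet
  have hL := hlin _ (hf s hs)
  have h1 := hf' s hs
  have h2 := hf' t ht
  rw [← hfst] at h2
  have hne : t - s ≠ 0 := sub_ne_zero.mpr hst.symm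
  refine ⟨f s, hf s hs, onLine_mk.mpr ⟨?_, ?_⟩⟩
  · convert hL.param_mem h1 h2 (-s / (t - s)) using 1
    ext <;> simp <;> field_simp <;> ring
  · convert hL.param_mem h1 h2 ((1 - s) / (t - s)) using 1
    ext <;> simp <;> field_simp <;> ring

lemma Aligned.symm {G : SimpleGraph V} {ρ : V → ℝ × ℝ} {e f : Sym2 V} (h : Aligned G ρ e f) :
    Aligned G ρ f e := by
  obtain ⟨u, v, w, huw, huv, hvw, rfl, rfl, hv⟩ := h
  exact ⟨w, v, u, huw.symm, hvw.symm, huv.symm, Sym2.eq_swap, Sym2.eq_swap,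
    by rwa [openSegment_symm]⟩

lemma reflTransGen_aligned_symm {G : SimpleGraph V} {ρ : V → ℝ × ℝ} {e f : Sym2 V}
    (h : Relation.ReflTransGen (Aligned G ρ) e f) : Relation.ReflTransGen (Aligned G ρ) f e :=
  haveI : Std.Symm (Aligned G ρ) := ⟨fun _ _ => Aligned.symm⟩
  Std.Symm.symm _ _ h

lemma Aligned.onLine {G : SimpleGraph V} {ρ : V → ℝ × ℝ} {e f : Sym2 V}
    {L : Set (ℝ × ℝ)} (hL : IsLine L) (h : Aligned G ρ e f) (he : OnLine ρ L e) :
    OnLine ρ L f := by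
  obtain ⟨u, v, w, huw, huv, hvw, rfl, rfl, a, b, ha, hb, hab, hv⟩ := h
  rw [onLine_mk] at he ⊢
  refine ⟨he.2, ?_⟩
  convert hL.param_mem he.1 he.2 (1 / b) using 1
  obtain rfl : a = 1 - b := by linarith
  rw [← hv]
  ext <;> simp <;> field_simp <;> ring

lemma onLine_of_reflTransGen {G : SimpleGraph V} {ρ : V → ℝ × ℝ}
    {e f : Sym2 V} {L : Set (ℝ × ℝ)} (hL : IsLine L)
    (h : Relation.ReflTransGen (Aligned G ρ) e f) (he : OnLine ρ L e) : OnLine ρ L f := by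
  induction h with
  | refl => exact he
  | tail _ h ih => exact h.onLine hL ih

lemma mem_edgeSet_of_reflTransGen {G : SimpleGraph V} {ρ : V → ℝ × ℝ}
    {e f : Sym2 V} (h : Relation.ReflTransGen (Aligned G ρ) e f) (he : e ∈ G.edgeSet) :
    f ∈ G.edgeSet := by
  induction h with
  | refl => exact he
  | tail _ h ih =>
    obtain ⟨u, v, w, -, -, hvw, -, rfl, -⟩ := h
    exact hvw

/-- Two edges on a common line sharing a vertex are equal or aligned: otherwise they would leave
the vertex in the same direction, and the far endpoint of one would lie on the other. -/
lemma aligned_of_onLine {G : SimpleGraph V} {ρ : V → ℝ × ℝ} (hρ : IsPlanarDrawing G ρ)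
    {L : Set (ℝ × ℝ)} (hL : IsLine L) {e f : Sym2 V} {v : V} (he : e ∈ G.edgeSet)
    (hf : f ∈ G.edgeSet) (hve : v ∈ e) (hvf : v ∈ f) (heL : OnLine ρ L e) (hfL : OnLine ρ L f) :
    Relation.ReflTransGen (Aligned G ρ) e f := by
  obtain ⟨u, rfl⟩ := hve
  obtain ⟨w, rfl⟩ := hvf
  rw [SimpleGraph.mem_edgeSet] at he hf
  rw [onLine_mk] at heL hfL
  by_cases huw : u = w
  · subst huw
    exact .refl
  obtain ⟨t, ht⟩ := hL.exists_param heL.1 heL.2 hfL.2 (hρ.inj.ne he.ne)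
  rcases lt_or_ge t 0 with h0 | h0
  · refine .single ⟨u, v, w, huw, he.symm, hf, Sym2.eq_swap, rfl, ?_⟩
    -- `ρ w - ρ v = t (ρ u - ρ v)` gives `(1 - t) ρ v = - t ρ u + ρ w`
    refine ⟨-t / (1 - t), 1 / (1 - t), div_pos (by linarith) (by linarith),
      div_pos one_pos (by linarith), ?_, ?_⟩
    · rw [← add_div, div_eq_one_iff_eq (by linarith)]
      ring
    · have : 1 - t ≠ 0 := by linarith
      rw [ht]
      ext <;> simp <;> field_simp <;> ring
  · exfalso
    rcases le_or_gt t 1 with h1 | h1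
    · refine hρ.vertex_not_on_edge he hf.ne' (Ne.symm huw) ?_
      rw [segment_eq_image']
      exact ⟨t, ⟨h0, h1⟩, ht.symm⟩
    · refine hρ.vertex_not_on_edge hf he.ne' huw ?_
      rw [segment_eq_image']
      refine ⟨1 / t, ⟨by positivity, (div_le_one (by linarith)).mpr h1.le⟩, ?_⟩
      have : t ≠ 0 := by linarith
      simp only [ht]
      ext <;> simp <;> field_simp <;> ring

/-- In a connected graph, a nonempty set of edges that is not everything has an edge sharing a
vertex with an edge outside the set. -/
lemma exists_leaving_edge {G : SimpleGraph V} (hconn : G.Connected) {S : Set (Sym2 V)}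
    {e : Sym2 V} (he : e ∈ S) (hS : ¬ G.edgeSet ⊆ S) :
    ∃ f ∈ S, ∃ g ∈ G.edgeSet, g ∉ S ∧ ∃ v, v ∈ f ∧ v ∈ g := by
  by_contra! hcon
  -- the vertices touched by `S` are closed under adjacency
  have hstep : ∀ x y : V, G.Reachable x y → (∃ f ∈ S, x ∈ f) → ∃ f ∈ S, y ∈ f := by
    rintro x y ⟨p⟩
    induction p with
    | nil => exact id
    | @cons a b c hab _ ih =>
      rintro ⟨f, hf, hxf⟩
      refine ih ⟨s(a, b), ?_, by simp⟩
      by_contra hg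
      exact hcon f hf s(a, b) hab hg a hxf (by simp)
  apply hS
  intro g hg
  induction e with | _ x _ =>
  induction g with | _ y z =>
  obtain ⟨f, hf, hyf⟩ := hstep x y (hconn.preconnected x y) ⟨_, he, by simp⟩
  by_contra hgS
  exact hcon f hf _ hg hgS y hyf (by simp)

/-- A drawing of a connected graph covered by `ℓ` lines has at most `ℓ ^ 2` segments. -/
lemma numSegments_le_sq {G : SimpleGraph V} (hconn : G.Connected) {ρ : V → ℝ × ℝ}
    (hρ : IsPlanarDrawing G ρ) {𝓛 : Finset (Set (ℝ × ℝ))} (hlin : ∀ L ∈ 𝓛, IsLine L)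
    (hcov : ∀ ⦃u v : V⦄, G.Adj u v → segment ℝ (ρ u) (ρ v) ⊆ ⋃ L ∈ 𝓛, L) :
    numSegments G ρ ≤ 𝓛.card ^ 2 := by
  have hline : ∀ e ∈ G.edgeSet, ∃ L ∈ 𝓛, OnLine ρ L e := by
    intro e he
    induction e with | _ u v =>
    exact exists_line_of_segment_subset hlin (hcov he)
  -- the pair of lines assigned to a segment
  have hpair : ∀ S ∈ {S : Set (Sym2 V) |
      ∃ e ∈ G.edgeSet, S = {f | Relation.ReflTransGen (Aligned G ρ) e f}},
      ∃ P : Set (ℝ × ℝ) × Set (ℝ × ℝ), P ∈ 𝓛 ×ˢ 𝓛 ∧ (∀ f ∈ S, OnLine ρ P.1 f) ∧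
        ((P.1 = P.2 ∧ G.edgeSet ⊆ S) ∨
          (P.1 ≠ P.2 ∧ ∃ f ∈ S, ∃ v ∈ f, ρ v ∈ P.2)) := by
    rintro S ⟨e, he, rfl⟩
    obtain ⟨L, hL, heL⟩ := hline e he
    have hSL : ∀ f, Relation.ReflTransGen (Aligned G ρ) e f → OnLine ρ L f :=
      fun f hf => onLine_of_reflTransGen (hlin L hL) hf heL
    by_cases hall : G.edgeSet ⊆ {f | Relation.ReflTransGen (Aligned G ρ) e f}
    · exact ⟨(L, L), by simp [hL], hSL, .inl ⟨rfl, hall⟩⟩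
    · obtain ⟨f, hf, g, hg, hgS, v, hvf, hvg⟩ := exists_leaving_edge hconn
        (S := {f | Relation.ReflTransGen (Aligned G ρ) e f}) Relation.ReflTransGen.refl hall
      obtain ⟨L', hL', hgL'⟩ := hline g hg
      refine ⟨(L, L'), by simp [hL, hL'], hSL, .inr ⟨?_, f, hf, v, hvf, hgL' v hvg⟩⟩
      rintro (rfl : L = L')
      exact hgS (hf.trans (aligned_of_onLine hρ (hlin L hL) (mem_edgeSet_of_reflTransGen hf he)
        hg hvf hvg (hSL f hf) hgL'))
  choose! F hF hF1 hF2 using hpair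
  have hcard : (𝓛.card ^ 2) = ((𝓛 ×ˢ 𝓛 : Finset _) : Set (Set (ℝ × ℝ) × Set (ℝ × ℝ))).ncard := by
    rw [Set.ncard_coe_finset, Finset.card_product, sq]
  rw [hcard]
  refine Set.ncard_le_ncard_of_injOn F (fun S hS => hF S hS) ?_ (Finset.finite_toSet _)
  intro S hS T hT hST
  have hS1 := hF1 S hS
  have hS2 := hF2 S hS
  have hT1 := hF1 T hT
  have hT2 := hF2 T hT
  have hP := hF S hS
  rw [← hST] at hT1 hT2
  obtain ⟨hP1, hP2⟩ := Finset.mem_product.mp hP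
  obtain ⟨e, he, rfl⟩ := hS
  obtain ⟨e', he', rfl⟩ := hT
  -- it suffices to connect the two representatives
  suffices h : Relation.ReflTransGen (Aligned G ρ) e e' by
    ext f
    exact ⟨fun hf => (reflTransGen_aligned_symm h).trans hf, fun hf => h.trans hf⟩
  rcases hS2 with ⟨-, hall⟩ | ⟨hne, f, hf, v, hvf, hv⟩
  · exact hall he'
  rcases hT2 with ⟨heq, -⟩ | ⟨-, f', hf', v', hvf', hv'⟩
  · exact absurd heq hne
  -- `v` and `v'` are both drawn at the intersection point of the two lines
  have hvv : v = v' := by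
    by_contra hvv
    exact hne ((hlin _ hP1).eq_of_mem (hlin _ hP2) (hρ.inj.ne hvv) (hS1 f hf v hvf)
      (hT1 f' hf' v' hvf') hv hv')
  subst hvv
  exact (hf.trans (aligned_of_onLine hρ (hlin _ hP1) (mem_edgeSet_of_reflTransGen hf he)
    (mem_edgeSet_of_reflTransGen hf' he') hvf hvf' (hS1 f hf) (hT1 f' hf'))).trans
    (reflTransGen_aligned_symm hf')

/-- Some drawing and finite set of lines realise the definition of `linNumber`, so the infimum is
attained: give each pair of vertices its own line. -/
lemma exists_line_cover [Fintype V] {G : SimpleGraph V} {ρ : V → ℝ × ℝ}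
    (hρ : IsPlanarDrawing G ρ) :
    ∃ 𝓛 : Finset (Set (ℝ × ℝ)), (∀ L ∈ 𝓛, IsLine L) ∧
      ∀ ⦃u v : V⦄, G.Adj u v → segment ℝ (ρ u) (ρ v) ⊆ ⋃ L ∈ 𝓛, L := by
  classical
  refine ⟨(Finset.univ.filter fun q : V × V => G.Adj q.1 q.2).image fun q =>
    {p : ℝ × ℝ | ∃ t : ℝ, p = ρ q.1 + t • (ρ q.2 - ρ q.1)}, ?_, ?_⟩
  · intro L hL
    simp only [Finset.mem_image, Finset.mem_filter] at hL
    obtain ⟨q, ⟨-, hq⟩, rfl⟩ := hL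
    exact ⟨_, _, hρ.inj.ne hq.ne, rfl⟩
  · intro u v huv p hp
    rw [segment_eq_image'] at hp
    obtain ⟨t, -, rfl⟩ := hp
    refine mem_biUnion (Finset.mem_coe.mpr (Finset.mem_image.mpr
      ⟨(u, v), Finset.mem_filter.mpr ⟨Finset.mem_univ _, huv⟩, rfl⟩)) ⟨t, rfl⟩

/-- for every connected planar graph `G`, `seg(G) ≤ lin(G)²`. -/
theorem segNumber_le_sq_linNumber_of_connected {V : Type*} [Fintype V] (G : SimpleGraph V)
    (hG : ∃ ρ : V → ℝ × ℝ, IsPlanarDrawing G ρ) (hconn : G.Connected) :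
    segNumber G ≤ linNumber G ^ 2 := by
  have hne : {n : ℕ | ∃ ρ : V → ℝ × ℝ, IsPlanarDrawing G ρ ∧
      ∃ 𝓛 : Finset (Set (ℝ × ℝ)), 𝓛.card = n ∧ (∀ L ∈ 𝓛, IsLine L) ∧
        ∀ ⦃u v : V⦄, G.Adj u v → segment ℝ (ρ u) (ρ v) ⊆ ⋃ L ∈ 𝓛, L}.Nonempty := by
    obtain ⟨ρ, hρ⟩ := hG
    obtain ⟨𝓛, h1, h2⟩ := exists_line_cover hρ
    exact ⟨_, ρ, hρ, 𝓛, rfl, h1, h2⟩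
  obtain ⟨ρ, hρ, 𝓛, hcard, hlin, hcov⟩ := Nat.sInf_mem hne
  have hlinNumber : 𝓛.card = linNumber G := hcard
  rw [← hlinNumber]
  have hseg : segNumber G ≤ numSegments G ρ := Nat.sInf_le ⟨ρ, hρ, rfl⟩
  exact hseg.trans (numSegments_le_sq hconn hρ hlin hcov)
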